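/- Let p > 1 be real, K > 0, and let μ : [0,∞) → [0,1] be nonincreasing with μ(s) ≤ K(1+s)^{−1/p} for all s ≥ 0. Let ω be a linear functional on L∞((0,∞)) which is positive (ω(f) ≥ 0 whenever f ≥ 0 a.e.), satisfies ess liminf_{t → +∞} f(t) ≤ ω(f) ≤ ess limsup_{t → +∞} f(t) for every real-valued f ∈ L∞((0,∞)), and satisfies ω ∘ D_c = ω, ω ∘ P^a = ω and ω ∘ M = ω for all c > 0 and a > 0. Define Z(t) = (1/log t)∫₀^∞ μ(s)^{p + 1/log t} ds for t > e, Z(t) = 0 for 0 < t ≤ e, and g_p(t) = (1/log(1+t))∫₀^t μ(s)^p ds for t > 0. Then Z and g_p are bounded and ω(Z) = p·ω(g_p). (This relates the residues (1/r)∫₀^∞ μ^{p+1/r} of the zeta function of T, where μ is the singular value function of the positive operator T ∈ L^{(p,∞)}, to p times the Dixmier trace of T^p, via the substitution r = log t.) -/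

import Mathlib

open Filter MeasureTheory

/-- A function is (everywhere) bounded. -/
def BddFun (f : ℝ → ℝ) : Prop := ∃ C : ℝ, ∀ x, |f x| ≤ C

/-- The logarithmic Cesàro operator: `(Mf)(t) = (1/log t)∫₁^t f(s) ds/s` for `t > 1`,
and `0` otherwise. -/
noncomputable def Mop (f : ℝ → ℝ) : ℝ → ℝ := fun t =>
  if 1 < t then (∫ s in (1:ℝ)..t, f s / s) / Real.log t else 0

/-- `Z(t) = (1/log t)∫₀^∞ μ(s)^{p + 1/log t} ds` for `t > e` (and `0` for `t ≤ e`). -/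
noncomputable def zetaPFn (p : ℝ) (μ : ℝ → ℝ) : ℝ → ℝ := fun t =>
  if Real.exp 1 < t then
    (∫ s in Set.Ioi (0:ℝ), μ s ^ (p + 1 / Real.log t)) / Real.log t
  else 0

/-- `g_p(t) = (1/log(1+t)) ∫₀^t μ(s)^p ds` for `t > 0` (and `0` for `t ≤ 0`). -/
noncomputable def gPFn (p : ℝ) (μ : ℝ → ℝ) : ℝ → ℝ := fun t =>
  if 0 < t then (∫ s in (0:ℝ)..t, μ s ^ p) / Real.log (1 + t) else 0

/-! Put `F t = ∫₀ᵗ μ ^ p` and `H x = F (eˣ - 1)`. The decay of `μ` makes `H` Lipschitz on `[0, ∞)`,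
and it bounds `∫ μ ^ (p + ε) - ∫ μ ^ p (1 + s) ^ (-ε / p)` uniformly in `ε = 1 / log t`. Integrating
by parts, `Z t` is therefore `∫₀^∞ (e^{-v / p} / p) H (v log t) / log t dv` up to `O (1 / log t)`.
The integrand is a continuous function of `v` with values in the bounded continuous functions of
`t`, so `ω` may be applied under the integral sign. Power invariance turns
`ω (H (v log t) / log t)` into `v ω (H (log t) / log t) = v ω (g_p)`, and the constant
`∫₀^∞ v e^{-v / p} / p dv` is `p`. -/

open Set Topology
open scoped BoundedContinuousFunction NNReal

section ExtendedLimits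

lemma BddFun.sub {f g : ℝ → ℝ} (hf : BddFun f) (hg : BddFun g) : BddFun (f - g) := by
  obtain ⟨C, hC⟩ := hf
  obtain ⟨D, hD⟩ := hg
  exact ⟨C + D, fun x => (abs_sub _ _).trans (add_le_add (hC x) (hD x))⟩

lemma BddFun.const_smul {f : ℝ → ℝ} (hf : BddFun f) (c : ℝ) : BddFun (c • f) := by
  obtain ⟨C, hC⟩ := hf
  refine ⟨|c| * C, fun x => ?_⟩
  rw [Pi.smul_apply, smul_eq_mul, abs_mul]
  exact mul_le_mul_of_nonneg_left (hC x) (abs_nonneg c)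

lemma BddFun.comp {f : ℝ → ℝ} (hf : BddFun f) (φ : ℝ → ℝ) : BddFun fun x => f (φ x) :=
  hf.imp fun _ hC x => hC (φ x)

lemma bddFun_coe (f : ℝ →ᵇ ℝ) : BddFun f :=
  ⟨‖f‖, f.norm_coe_le_norm⟩

/-- Extended limits at `+∞` on `L∞((0,∞))`, encoded as linear functionals on all real functions
that are only constrained on the bounded measurable ones. -/
def IsExtendedLimit (ω : (ℝ → ℝ) →ₗ[ℝ] ℝ) : Prop :=
  ∀ f : ℝ → ℝ, Measurable f → BddFun f →
    liminf f (atTop ⊓ ae ((volume : Measure ℝ).restrict (Ioi 0))) ≤ ω f ∧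
      ω f ≤ limsup f (atTop ⊓ ae ((volume : Measure ℝ).restrict (Ioi 0)))

/-- Invariance of a functional under the power maps `f ↦ f (· ^ a)`, `a > 0`, on bounded measurable
functions. -/
def IsPowerInvariant (ω : (ℝ → ℝ) →ₗ[ℝ] ℝ) : Prop :=
  ∀ f : ℝ → ℝ, Measurable f → BddFun f → ∀ a : ℝ, 0 < a → ω (fun t => f (t ^ a)) = ω f

instance neBot_atTop_inf_ae_restrict_Ioi (a : ℝ) :
    (atTop ⊓ ae ((volume : Measure ℝ).restrict (Ioi a))).NeBot := by
  refine inf_neBot_iff.2 fun {s} hs {t} ht => ?_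
  obtain ⟨b, hb⟩ := mem_atTop_sets.1 hs
  have ht' : t ∈ ae ((volume : Measure ℝ).restrict (Ioi (max a b))) :=
    ae_mono (Measure.restrict_mono (Ioi_subset_Ioi (le_max_left a b)) le_rfl) ht
  have : (ae ((volume : Measure ℝ).restrict (Ioi (max a b)))).NeBot :=
    ae_restrict_neBot.2 (by simp)
  obtain ⟨x, hxt, hx⟩ :=
    Filter.nonempty_of_mem (inter_mem ht' (ae_restrict_mem measurableSet_Ioi))
  exact ⟨x, hb x ((le_max_right a b).trans (le_of_lt hx)), hxt⟩

namespace IsExtendedLimit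

variable {ω : (ℝ → ℝ) →ₗ[ℝ] ℝ}

lemma apply_eq_of_tendsto (hω : IsExtendedLimit ω) {f : ℝ → ℝ} (hf : Measurable f)
    (hfb : BddFun f) {l : ℝ} (hl : Tendsto f atTop (𝓝 l)) : ω f = l := by
  have hl' : Tendsto f (atTop ⊓ ae ((volume : Measure ℝ).restrict (Ioi 0))) (𝓝 l) :=
    hl.mono_left inf_le_left
  have hbounds := hω f hf hfb
  rw [hl'.liminf_eq, hl'.limsup_eq] at hbounds
  exact le_antisymm hbounds.2 hbounds.1

lemma apply_congr (hω : IsExtendedLimit ω) {f g : ℝ → ℝ} (hf : Measurable f) (hfb : BddFun f)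
    (hg : Measurable g) (hgb : BddFun g) (hfg : Tendsto (f - g) atTop (𝓝 0)) : ω f = ω g := by
  rw [← sub_eq_zero, ← map_sub]
  exact hω.apply_eq_of_tendsto (hf.sub hg) (hfb.sub hgb) hfg

lemma abs_apply_le (hω : IsExtendedLimit ω) {f : ℝ → ℝ} (hf : Measurable f) {C : ℝ}
    (hC : ∀ x, |f x| ≤ C) : |ω f| ≤ C := by
  have hle : ∀ x, f x ≤ C := fun x => (abs_le.1 (hC x)).2
  have hge : ∀ x, -C ≤ f x := fun x => (abs_le.1 (hC x)).1
  obtain ⟨hinf, hsup⟩ := hω f hf ⟨C, hC⟩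
  refine abs_le.2 ⟨le_trans ?_ hinf, hsup.trans ?_⟩
  · exact le_liminf_of_le (isBoundedUnder_of ⟨C, hle⟩).isCoboundedUnder_ge (.of_forall hge)
  · exact limsup_le_of_le (isBoundedUnder_of ⟨-C, hge⟩).isCoboundedUnder_le (.of_forall hle)

/-- An extended limit as a continuous functional on the bounded continuous functions. Its domain is
a Banach space, on which it can be interchanged with Bochner integrals. -/
noncomputable def toContinuousLinearMap (hω : IsExtendedLimit ω) : (ℝ →ᵇ ℝ) →L[ℝ] ℝ :=
  LinearMap.mkContinuous
    { toFun := fun f => ω f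
      map_add' := fun f g => map_add ω (f : ℝ → ℝ) g
      map_smul' := fun c f => map_smul ω c (f : ℝ → ℝ) }
    1 fun f => by
      simpa using hω.abs_apply_le f.continuous.measurable f.norm_coe_le_norm

end IsExtendedLimit

end ExtendedLimits

section LogScaling

/-- The logarithm frozen at the value `1` on `(-∞, e]`, which makes it continuous and bounded away
from `0` on the whole line. -/
noncomputable def truncLog (t : ℝ) : ℝ := Real.log (max t (Real.exp 1))

lemma truncLog_of_exp_one_le {t : ℝ} (ht : Real.exp 1 ≤ t) : truncLog t = Real.log t := by
  rw [truncLog, max_eq_left ht]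

lemma truncLog_pos (t : ℝ) : 0 < truncLog t :=
  Real.log_pos ((Real.one_lt_exp_iff.2 one_pos).trans_le (le_max_right _ _))

lemma continuous_truncLog : Continuous truncLog :=
  Continuous.log (by fun_prop) fun _ => ((Real.exp_pos 1).trans_le (le_max_right _ _)).ne'

variable {C : ℝ≥0} {H : ℝ → ℝ}

lemma abs_le_mul_abs_of_lipschitzWith (hH : LipschitzWith C H) (hH0 : H 0 = 0) (x : ℝ) :
    |H x| ≤ C * |x| := by
  simpa [hH0] using hH.dist_le_mul x 0

lemma abs_div_sub_div_le_of_lipschitzWith (hH : LipschitzWith C H) (hH0 : H 0 = 0) {x y : ℝ}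
    (hx : 0 < x) (hy : 0 < y) : |H x / x - H y / y| ≤ 2 * C * |x - y| / x := by
  have hxy : |H x - H y| ≤ C * |x - y| := hH.dist_le_mul x y
  have hy' : |H y| / y ≤ C := by
    rw [div_le_iff₀ hy]
    simpa [abs_of_pos hy] using abs_le_mul_abs_of_lipschitzWith hH hH0 y
  have hsplit : H x / x - H y / y = ((H x - H y) - H y / y * (x - y)) / x := by
    field_simp
    ring
  rw [hsplit, abs_div, abs_of_pos hx]
  gcongr
  calc |(H x - H y) - H y / y * (x - y)|
      ≤ |H x - H y| + |H y| / y * |x - y| := by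
        grw [abs_sub, abs_mul, abs_div, abs_of_pos hy]
    _ ≤ C * |x - y| + C * |x - y| := by gcongr
    _ = 2 * C * |x - y| := by ring

/-- The function `t ↦ H (u log t) / log t`, with the logarithm truncated so as to obtain a bounded
continuous function on the line. -/
noncomputable def logScaling (hH : LipschitzWith C H) (hH0 : H 0 = 0) (u : ℝ) : ℝ →ᵇ ℝ :=
  .ofNormedAddCommGroup (fun t => H (u * truncLog t) / truncLog t)
    ((hH.continuous.comp (continuous_const.mul continuous_truncLog)).div continuous_truncLog
      fun t => (truncLog_pos t).ne')
    (C * |u|) fun t => by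
      rw [Real.norm_eq_abs, abs_div, abs_of_pos (truncLog_pos t), div_le_iff₀ (truncLog_pos t)]
      simpa [abs_mul, abs_of_pos (truncLog_pos t), mul_assoc]
        using abs_le_mul_abs_of_lipschitzWith hH hH0 (u * truncLog t)

variable (hH : LipschitzWith C H) (hH0 : H 0 = 0)

lemma logScaling_apply (u t : ℝ) :
    logScaling hH hH0 u t = H (u * truncLog t) / truncLog t := rfl

lemma norm_logScaling_le (u : ℝ) : ‖logScaling hH hH0 u‖ ≤ C * |u| :=
  BoundedContinuousFunction.norm_ofNormedAddCommGroup_le _ (by positivity) _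

lemma lipschitzWith_logScaling : LipschitzWith C (logScaling hH hH0) := by
  refine LipschitzWith.of_dist_le_mul fun u v => ?_
  refine (BoundedContinuousFunction.dist_le (by positivity)).2 fun t => ?_
  have hL := truncLog_pos t
  have hdist := hH.dist_le_mul (u * truncLog t) (v * truncLog t)
  rw [Real.dist_eq, Real.dist_eq, ← sub_mul, abs_mul, abs_of_pos hL, ← mul_assoc] at hdist
  rwa [Real.dist_eq, logScaling_apply, logScaling_apply, ← sub_div, abs_div, abs_of_pos hL,
    div_le_iff₀ hL, Real.dist_eq]

lemma integrableOn_smul_logScaling {k : ℝ → ℝ} (hk : IntegrableOn (fun u => k u * u) (Ioi 0)) :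
    IntegrableOn (fun u => k u • logScaling hH hH0 u) (Ioi 0) := by
  have hmeas : AEStronglyMeasurable (fun u => u⁻¹ • logScaling hH hH0 u)
      (volume.restrict (Ioi 0)) :=
    measurable_inv.aestronglyMeasurable.smul
      (lipschitzWith_logScaling hH hH0).continuous.aestronglyMeasurable
  have hbound : ∀ᵐ u ∂volume.restrict (Ioi 0), ‖u⁻¹ • logScaling hH hH0 u‖ ≤ C := by
    filter_upwards [ae_restrict_mem measurableSet_Ioi] with u hu
    have hu : (0 : ℝ) < u := hu
    rw [norm_smul, norm_inv, Real.norm_eq_abs, inv_mul_le_iff₀ (abs_pos.2 hu.ne'), mul_comm]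
    exact norm_logScaling_le hH hH0 u
  refine (hk.smul_bdd C hmeas hbound).congr ?_
  filter_upwards [ae_restrict_mem measurableSet_Ioi] with u hu
  have hu : u ≠ 0 := ne_of_gt hu
  simp only [Pi.smul_apply', smul_smul, mul_assoc, mul_inv_cancel₀ hu, mul_one]

lemma integral_smul_logScaling_apply {k : ℝ → ℝ} (hk : IntegrableOn (fun u => k u * u) (Ioi 0))
    (t : ℝ) : (∫ u in Ioi 0, k u • logScaling hH hH0 u) t =
      ∫ u in Ioi 0, k u * (H (u * truncLog t) / truncLog t) :=
  ((BoundedContinuousFunction.evalCLM ℝ t).integral_comp_comm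
    (integrableOn_smul_logScaling hH hH0 hk)).symm

namespace IsExtendedLimit

variable {ω : (ℝ → ℝ) →ₗ[ℝ] ℝ}

lemma apply_logScaling (hω : IsExtendedLimit ω) (hpow : IsPowerInvariant ω) {u : ℝ} (hu : 0 < u) :
    ω (logScaling hH hH0 u) = u * ω (logScaling hH hH0 1) := by
  set W := logScaling hH hH0 with hW
  have hWm (v : ℝ) : Measurable (W v) := (W v).continuous.measurable
  have hWm' : Measurable fun t : ℝ => W 1 (t ^ u) := (hWm 1).comp (by fun_prop)
  rw [← hpow _ (hWm 1) (bddFun_coe _) u hu, ← smul_eq_mul, ← map_smul]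
  refine hω.apply_congr (hWm u) (bddFun_coe _) (hWm'.const_smul u)
    (((bddFun_coe _).comp _).const_smul u) (tendsto_const_nhds.congr' ?_)
  filter_upwards [eventually_ge_atTop (Real.exp 1),
    (tendsto_rpow_atTop hu).eventually (eventually_ge_atTop (Real.exp 1))] with t ht htu
  have ht0 : 0 < t := (Real.exp_pos 1).trans_le ht
  simp only [Pi.sub_apply, Pi.smul_apply, smul_eq_mul, hW, logScaling_apply,
    truncLog_of_exp_one_le ht, truncLog_of_exp_one_le htu, Real.log_rpow ht0, one_mul]
  rw [← mul_div_assoc, mul_div_mul_left _ _ hu.ne', sub_self]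

theorem apply_integral_smul_logScaling (hω : IsExtendedLimit ω) (hpow : IsPowerInvariant ω)
    {k : ℝ → ℝ} (hk : IntegrableOn (fun u => k u * u) (Ioi 0)) :
    ω ⇑(∫ u in Ioi 0, k u • logScaling hH hH0 u) =
      (∫ u in Ioi 0, k u * u) * ω (logScaling hH hH0 1) := by
  let Ω := hω.toContinuousLinearMap
  calc ω ⇑(∫ u in Ioi 0, k u • logScaling hH hH0 u)
      = ∫ u in Ioi 0, Ω (k u • logScaling hH hH0 u) :=
        (Ω.integral_comp_comm (integrableOn_smul_logScaling hH hH0 hk)).symm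
    _ = ∫ u in Ioi 0, k u * u * ω (logScaling hH hH0 1) := by
        refine setIntegral_congr_fun measurableSet_Ioi fun u hu => ?_
        have hΩ : Ω (logScaling hH hH0 u) = u * ω (logScaling hH hH0 1) :=
          hω.apply_logScaling hH hH0 hpow hu
        simp only [map_smul, smul_eq_mul, hΩ, mul_assoc]
    _ = (∫ u in Ioi 0, k u * u) * ω (logScaling hH hH0 1) := integral_mul_const _ _

end IsExtendedLimit

end LogScaling

section Laplace

lemma integrableOn_one_add_rpow_Ioi {a : ℝ} (ha : a < -1) :
    IntegrableOn (fun s : ℝ => (1 + s) ^ a) (Ioi 0) := by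
  simpa only [add_comm] using integrableOn_add_rpow_Ioi_of_lt (m := 1) ha neg_one_lt_zero

lemma integral_one_add_rpow_Ioi {a : ℝ} (ha : a < -1) :
    ∫ s in Ioi (0 : ℝ), (1 + s) ^ a = -1 / (a + 1) := by
  have hshift := (measurePreserving_add_left volume (1 : ℝ)).setIntegral_preimage_emb
    (measurableEmbedding_addLeft 1) (fun s : ℝ => s ^ a) (Ioi 1)
  rw [preimage_const_add_Ioi, sub_self] at hshift
  rw [hshift, integral_Ioi_rpow_of_lt ha one_pos, Real.one_rpow]

/-- The integrand on the region `log (1 + s) < x` whose two iterated integrals are the two sides of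
the integration by parts `integral_mul_one_add_rpow_neg`. -/
noncomputable def laplaceIntegrand (a : ℝ → ℝ) (z : ℝ) : ℝ × ℝ → ℝ :=
  {q : ℝ × ℝ | Real.log (1 + q.1) < q.2}.indicator fun q => a q.1 * Real.exp (-(z * q.2))

variable {a : ℝ → ℝ} {z s x : ℝ}

lemma laplaceIntegrand_eq_indicator (a : ℝ → ℝ) (z s : ℝ) :
    (fun x => laplaceIntegrand a z (s, x)) =
      (Ioi (Real.log (1 + s))).indicator fun x => a s * Real.exp (-(z * x)) := by
  ext x
  simp only [laplaceIntegrand, indicator_apply, mem_ofPred_eq, mem_Ioi]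

lemma norm_laplaceIntegrand (a : ℝ → ℝ) (z : ℝ) (q : ℝ × ℝ) :
    ‖laplaceIntegrand a z q‖ = laplaceIntegrand (fun s => |a s|) z q := by
  simp only [laplaceIntegrand, norm_indicator_eq_indicator_norm, norm_mul, Real.norm_eq_abs,
    Real.abs_exp]

lemma integral_laplaceIntegrand_right (hz : 0 < z) (hs : 0 < s) :
    ∫ x in Ioi 0, laplaceIntegrand a z (s, x) = a s * (1 + s) ^ (-z) / z := by
  have hsub : Ioi (Real.log (1 + s)) ⊆ Ioi 0 :=
    Ioi_subset_Ioi (Real.log_nonneg (by linarith))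
  have hexp := integral_exp_mul_Ioi (neg_lt_zero.2 hz) (Real.log (1 + s))
  simp only [neg_mul] at hexp
  rw [laplaceIntegrand_eq_indicator, setIntegral_indicator measurableSet_Ioi,
    inter_eq_right.2 hsub, integral_const_mul, hexp, neg_div_neg_eq, mul_div_assoc,
    Real.rpow_def_of_pos (by linarith), mul_neg, mul_comm z]

lemma integral_laplaceIntegrand_left (hx : 0 < x) :
    ∫ s in Ioi 0, laplaceIntegrand a z (s, x) =
      Real.exp (-(z * x)) * ∫ s in (0 : ℝ)..(Real.exp x - 1), a s := by
  have hx1 : 0 ≤ Real.exp x - 1 := sub_nonneg.2 (Real.one_le_exp hx.le)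
  have hsection : ∀ s ∈ Ioi (0 : ℝ), laplaceIntegrand a z (s, x) =
      (Iio (Real.exp x - 1)).indicator (fun s => Real.exp (-(z * x)) * a s) s := by
    intro s hs
    have hs' : 0 < 1 + s := add_pos one_pos hs
    simp only [laplaceIntegrand, indicator_apply, mem_ofPred_eq, mem_Iio,
      Real.log_lt_iff_lt_exp hs', lt_sub_iff_add_lt', mul_comm (a s)]
  rw [setIntegral_congr_fun measurableSet_Ioi hsection, setIntegral_indicator measurableSet_Iio,
    Ioi_inter_Iio, integral_const_mul, intervalIntegral.integral_of_le hx1,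
    integral_Ioc_eq_integral_Ioo]

lemma integrable_laplaceIntegrand (hz : 0 < z)
    (ha : IntegrableOn (fun s => a s * (1 + s) ^ (-z)) (Ioi 0)) :
    Integrable (laplaceIntegrand a z)
      ((volume.restrict (Ioi 0)).prod (volume.restrict (Ioi 0))) := by
  have ham : AEStronglyMeasurable a (volume.restrict (Ioi 0)) := by
    have hweight : Measurable fun s : ℝ => (1 + s) ^ z := by fun_prop
    refine (ha.1.mul hweight.aestronglyMeasurable).congr ?_
    filter_upwards [ae_restrict_mem measurableSet_Ioi] with s hs
    have hs' : 0 < 1 + s := add_pos one_pos hs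
    rw [Pi.mul_apply, mul_assoc, ← Real.rpow_add hs', neg_add_cancel, Real.rpow_zero, mul_one]
  have hregion : MeasurableSet {q : ℝ × ℝ | Real.log (1 + q.1) < q.2} :=
    measurableSet_lt (by fun_prop) (by fun_prop)
  have hexp : Continuous fun q : ℝ × ℝ => Real.exp (-(z * q.2)) := by fun_prop
  have hmeas : AEStronglyMeasurable (laplaceIntegrand a z)
      ((volume.restrict (Ioi 0)).prod (volume.restrict (Ioi 0))) :=
    (ham.comp_fst.mul hexp.aestronglyMeasurable).indicator hregion
  refine (integrable_prod_iff hmeas).2 ⟨.of_forall fun s => ?_, ?_⟩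
  · rw [laplaceIntegrand_eq_indicator]
    have hint := (integrableOn_exp_mul_Ioi (neg_lt_zero.2 hz) 0).const_mul (a s)
    simp only [neg_mul] at hint
    exact hint.indicator measurableSet_Ioi
  · refine (ha.norm.div_const z).congr ?_
    filter_upwards [ae_restrict_mem measurableSet_Ioi] with s hs
    have hs' : 0 < 1 + s := add_pos one_pos hs
    simp only [norm_laplaceIntegrand, integral_laplaceIntegrand_right hz hs]
    rw [norm_mul, Real.norm_eq_abs, Real.norm_of_nonneg (Real.rpow_nonneg hs'.le _)]

theorem integral_mul_one_add_rpow_neg (hz : 0 < z)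
    (ha : IntegrableOn (fun s => a s * (1 + s) ^ (-z)) (Ioi 0)) :
    ∫ s in Ioi 0, a s * (1 + s) ^ (-z) =
      z * ∫ x in Ioi 0, Real.exp (-(z * x)) * ∫ s in (0 : ℝ)..(Real.exp x - 1), a s := by
  rw [mul_comm z, ← div_eq_iff hz.ne', ← integral_div]
  calc ∫ s in Ioi 0, a s * (1 + s) ^ (-z) / z
      = ∫ s in Ioi 0, ∫ x in Ioi 0, laplaceIntegrand a z (s, x) :=
        setIntegral_congr_fun measurableSet_Ioi fun _ hs =>
          (integral_laplaceIntegrand_right hz hs).symm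
    _ = ∫ x in Ioi 0, ∫ s in Ioi 0, laplaceIntegrand a z (s, x) :=
        integral_integral_swap (integrable_laplaceIntegrand hz ha)
    _ = ∫ x in Ioi 0, Real.exp (-(z * x)) * ∫ s in (0 : ℝ)..(Real.exp x - 1), a s :=
        setIntegral_congr_fun measurableSet_Ioi fun _ hx => integral_laplaceIntegrand_left hx

lemma integral_exp_neg_div_div_mul {p : ℝ} (hp : 0 < p) :
    ∫ v in Ioi 0, Real.exp (-(v / p)) / p * v = p := by
  have hGamma := Real.integral_rpow_mul_exp_neg_mul_Ioi two_pos (inv_pos.2 hp)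
  norm_num at hGamma
  calc ∫ v in Ioi 0, Real.exp (-(v / p)) / p * v
      = ∫ v in Ioi 0, p⁻¹ * (v * Real.exp (-(p⁻¹ * v))) := by
        congr 1 with v
        rw [div_eq_inv_mul v p]
        ring
    _ = p := by
        rw [integral_const_mul, hGamma]
        field_simp

lemma integrableOn_exp_neg_div_div_mul {p : ℝ} (hp : 0 < p) :
    IntegrableOn (fun v => Real.exp (-(v / p)) / p * v) (Ioi 0) :=
  .of_integral_ne_zero (by rw [integral_exp_neg_div_div_mul hp]; exact hp.ne')

end Laplace

section RpowPerturbation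

variable {p e x K : ℝ}

lemma one_sub_rpow_le (hx : 0 < x) (e : ℝ) : 1 - x ^ e ≤ -Real.log x * e := by
  rw [Real.rpow_def_of_pos hx]
  linarith [Real.add_one_le_exp (Real.log x * e)]

lemma rpow_sub_rpow_add_le (hp : 0 < p) (he : 0 ≤ e) (hx : 0 < x) :
    x ^ p - x ^ (p + e) ≤ 1 / p * e := by
  have hlog : -Real.log x ≤ (x ^ p)⁻¹ / p := by
    rw [← Real.log_inv, ← Real.inv_rpow hx.le]
    exact Real.log_le_rpow_div (inv_pos.2 hx).le hp
  calc x ^ p - x ^ (p + e) = x ^ p * (1 - x ^ e) := by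
        rw [Real.rpow_add hx]
        ring
    _ ≤ x ^ p * ((x ^ p)⁻¹ / p * e) := by grw [one_sub_rpow_le hx, hlog]
    _ = 1 / p * e := by field_simp

lemma rpow_add_sub_rpow_le (hp : 0 < p) (he : 0 ≤ e) (he1 : e ≤ 1) (hx : 1 ≤ x) (hxK : x ≤ K) :
    x ^ (p + e) - x ^ p ≤ K ^ (p + 2) * e := by
  have hx0 : 0 < x := one_pos.trans_le hx
  have hlog : Real.log x ≤ x := (Real.log_le_sub_one_of_pos hx0).trans (by linarith)
  calc x ^ (p + e) - x ^ p = x ^ (p + e) * (1 - x ^ (-e)) := by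
        rw [mul_one_sub, ← Real.rpow_add hx0, add_neg_cancel_right]
    _ ≤ x ^ (p + 1) * (x * e) := by
        have := one_sub_rpow_le hx0 (-e)
        rw [neg_mul_neg] at this
        grw [this, hlog, he1]
    _ = x ^ (p + 2) * e := by
        rw [← mul_assoc, ← Real.rpow_add_one hx0.ne']
        ring_nf
    _ ≤ K ^ (p + 2) * e := by gcongr

lemma abs_rpow_add_sub_rpow_le (hp : 0 < p) (he : 0 ≤ e) (he1 : e ≤ 1) (hx : 0 ≤ x) (hxK : x ≤ K) :
    |x ^ (p + e) - x ^ p| ≤ (1 / p + K ^ (p + 2)) * e := by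
  have hK : 0 ≤ K := hx.trans hxK
  rcases hx.eq_or_lt with rfl | hx0
  · rw [Real.zero_rpow (by positivity), Real.zero_rpow hp.ne', sub_zero, abs_zero]
    positivity
  have hKe : 0 ≤ K ^ (p + 2) * e := by positivity
  have hpe : 0 ≤ 1 / p * e := by positivity
  have hlower := rpow_sub_rpow_add_le hp he hx0
  refine abs_le.2 ⟨by linarith, ?_⟩
  rcases le_total x 1 with hx1 | hx1
  · have := Real.rpow_le_rpow_of_exponent_ge hx0 hx1 (le_add_of_nonneg_right he : p ≤ p + e)
    linarith
  · linarith [rpow_add_sub_rpow_le hp he he1 hx1 hxK]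

lemma abs_rpow_add_sub_rpow_mul_rpow_le {n : ℝ} (hp : 0 < p) (he : 0 ≤ e) (he1 : e ≤ 1)
    (hn : 0 < n) (hx : 0 ≤ x) (hxK : x ≤ K * n) :
    |x ^ (p + e) - x ^ p * n ^ e| ≤ (1 / p + K ^ (p + 2)) * e * n ^ (p + e) := by
  obtain ⟨y, rfl⟩ : ∃ y, x = y * n := ⟨x / n, by field_simp⟩
  have hy : 0 ≤ y := nonneg_of_mul_nonneg_left hx hn
  have hsplit : (y * n) ^ (p + e) - (y * n) ^ p * n ^ e = (y ^ (p + e) - y ^ p) * n ^ (p + e) := by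
    rw [Real.mul_rpow hy hn.le, Real.mul_rpow hy hn.le, mul_assoc, ← Real.rpow_add hn, ← sub_mul]
  rw [hsplit, abs_mul, abs_of_pos (Real.rpow_pos_of_pos hn _)]
  gcongr
  exact abs_rpow_add_sub_rpow_le hp he he1 hy (le_of_mul_le_mul_right hxK hn)

end RpowPerturbation


section WeakLp

/-- The estimate `μ(s) ≤ K (1 + s)^{-1/p}` satisfied by the singular value function `μ` of an
operator in `L^{(p,∞)}`, required on `(0, ∞)` only. -/
structure IsWeakLpBounded (p K : ℝ) (μ : ℝ → ℝ) : Prop where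
  aemeasurable : AEMeasurable μ (volume.restrict (Ioi 0))
  nonneg : ∀ s, 0 < s → 0 ≤ μ s
  le : ∀ s, 0 < s → μ s ≤ K * (1 + s) ^ (-(1 / p))

/-- The primitive of `μ ^ p` in the variable `x = log (1 + t)`, extended evenly to `x < 0` so that
it is Lipschitz on the whole line. -/
noncomputable def logPrimitive (p : ℝ) (μ : ℝ → ℝ) (x : ℝ) : ℝ :=
  ∫ s in (0 : ℝ)..(Real.exp |x| - 1), μ s ^ p

lemma logPrimitive_zero (p : ℝ) (μ : ℝ → ℝ) : logPrimitive p μ 0 = 0 := by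
  rw [logPrimitive, abs_zero, Real.exp_zero, sub_self, intervalIntegral.integral_same]

lemma gPFn_of_pos (p : ℝ) (μ : ℝ → ℝ) {t : ℝ} (ht : 0 < t) :
    gPFn p μ t = logPrimitive p μ (Real.log (1 + t)) / Real.log (1 + t) := by
  have hlog : 0 ≤ Real.log (1 + t) := Real.log_nonneg (by linarith)
  rw [gPFn, if_pos ht, logPrimitive, abs_of_nonneg hlog, Real.exp_log (by linarith),
    add_sub_cancel_left]

lemma integral_one_add_inv {a b : ℝ} (ha : 0 ≤ a) (hb : 0 ≤ b) :
    ∫ s in a..b, (1 + s)⁻¹ = Real.log (1 + b) - Real.log (1 + a) := by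
  rw [intervalIntegral.integral_comp_add_left (fun s => s⁻¹),
    integral_inv_of_pos (by linarith) (by linarith), Real.log_div (by linarith) (by linarith)]

lemma neg_one_div_mul_add {p : ℝ} (hp : p ≠ 0) (e : ℝ) : -(1 / p) * (p + e) = -1 - e / p := by
  field_simp
  ring

namespace IsWeakLpBounded

variable {p K : ℝ} {μ : ℝ → ℝ}

lemma constant_nonneg (hμ : IsWeakLpBounded p K μ) : 0 ≤ K :=
  nonneg_of_mul_nonneg_left ((hμ.nonneg 1 one_pos).trans (hμ.le 1 one_pos)) (by positivity)

lemma rpow_le (hμ : IsWeakLpBounded p K μ) (hp : 0 < p) {s : ℝ} (hs : 0 < s) :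
    μ s ^ p ≤ K ^ p * (1 + s)⁻¹ := by
  have hs' : 0 ≤ 1 + s := by linarith
  calc μ s ^ p ≤ (K * (1 + s) ^ (-(1 / p))) ^ p :=
        Real.rpow_le_rpow (hμ.nonneg s hs) (hμ.le s hs) hp.le
    _ = K ^ p * (1 + s)⁻¹ := by
        rw [Real.mul_rpow hμ.constant_nonneg (by positivity), ← Real.rpow_mul hs', neg_mul,
          one_div_mul_cancel hp.ne', Real.rpow_neg_one]

lemma intervalIntegrable_rpow (hμ : IsWeakLpBounded p K μ) (hp : 0 < p) {a b : ℝ} (ha : 0 ≤ a)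
    (hb : 0 ≤ b) : IntervalIntegrable (fun s => μ s ^ p) volume a b := by
  have hsub : uIoc a b ⊆ Ioi 0 := fun s hs => (le_min ha hb).trans_lt hs.1
  have hmeas : AEMeasurable (fun s => μ s ^ p) (volume.restrict (uIoc a b)) :=
    (hμ.aemeasurable.pow_const p).mono_measure (Measure.restrict_mono hsub le_rfl)
  refine intervalIntegrable_iff.2 <|
    (integrableOn_const (C := K ^ p) measure_Ioc_lt_top.ne).mono' hmeas.aestronglyMeasurable ?_
  filter_upwards [ae_restrict_mem measurableSet_uIoc] with s hs
  have hs : 0 < s := hsub hs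
  have hK := hμ.constant_nonneg
  rw [Real.norm_of_nonneg (Real.rpow_nonneg (hμ.nonneg s hs) p)]
  exact (hμ.rpow_le hp hs).trans
    (mul_le_of_le_one_right (by positivity) (inv_le_one_of_one_le₀ (by linarith)))

lemma integral_rpow_nonneg (hμ : IsWeakLpBounded p K μ) {a b : ℝ} (ha : 0 ≤ a) (hab : a ≤ b) :
    0 ≤ ∫ s in a..b, μ s ^ p := by
  rw [intervalIntegral.integral_of_le hab]
  exact setIntegral_nonneg measurableSet_Ioc fun s hs =>
    Real.rpow_nonneg (hμ.nonneg s (ha.trans_lt hs.1)) p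

lemma integral_rpow_le (hμ : IsWeakLpBounded p K μ) (hp : 0 < p) {a b : ℝ} (ha : 0 ≤ a)
    (hab : a ≤ b) :
    ∫ s in a..b, μ s ^ p ≤ K ^ p * (Real.log (1 + b) - Real.log (1 + a)) := by
  have hb := ha.trans hab
  rw [← integral_one_add_inv ha hb, ← intervalIntegral.integral_const_mul]
  refine intervalIntegral.integral_mono_on_of_le_Ioo hab (hμ.intervalIntegrable_rpow hp ha hb)
    (ContinuousOn.intervalIntegrable ?_) fun s hs => hμ.rpow_le hp (ha.trans_lt hs.1)
  rw [uIcc_of_le hab]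
  exact continuousOn_const.mul
    (ContinuousOn.inv₀ (by fun_prop) fun s hs => by linarith [ha.trans hs.1])

lemma lipschitzWith_logPrimitive (hμ : IsWeakLpBounded p K μ) (hp : 0 < p) :
    LipschitzWith (K ^ p).toNNReal (logPrimitive p μ) := by
  have hKp : 0 ≤ K ^ p := Real.rpow_nonneg hμ.constant_nonneg p
  have hexp (x : ℝ) : 0 ≤ Real.exp |x| - 1 := sub_nonneg.2 (Real.one_le_exp (abs_nonneg x))
  have hdiff (x y : ℝ) : logPrimitive p μ y - logPrimitive p μ x =
      ∫ s in (Real.exp |x| - 1)..(Real.exp |y| - 1), μ s ^ p :=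
    intervalIntegral.integral_interval_sub_left (hμ.intervalIntegrable_rpow hp le_rfl (hexp y))
      (hμ.intervalIntegrable_rpow hp le_rfl (hexp x))
  refine LipschitzWith.of_le_add_mul' _ fun x y => ?_
  rw [← sub_le_iff_le_add', hdiff]
  rcases le_total |x| |y| with hxy | hxy
  · have hle : Real.exp |x| - 1 ≤ Real.exp |y| - 1 := by gcongr
    rw [intervalIntegral.integral_symm]
    exact (neg_nonpos.2 (hμ.integral_rpow_nonneg (hexp x) hle)).trans (by positivity)
  · have hle : Real.exp |y| - 1 ≤ Real.exp |x| - 1 := by gcongr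
    have hint := hμ.integral_rpow_le hp (hexp y) hle
    rw [add_sub_cancel, add_sub_cancel, Real.log_exp, Real.log_exp] at hint
    exact hint.trans (mul_le_mul_of_nonneg_left (abs_sub_abs_le_abs_sub x y) hKp)

lemma measurable_gPFn (hμ : IsWeakLpBounded p K μ) (hp : 0 < p) : Measurable (gPFn p μ) := by
  have hH := (hμ.lipschitzWith_logPrimitive hp).continuous.measurable
  have hlog : Measurable fun t : ℝ => Real.log (1 + t) := by fun_prop
  have hind : gPFn p μ = (Ioi 0).indicator fun t =>
      logPrimitive p μ (Real.log (1 + t)) / Real.log (1 + t) := by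
    ext t
    by_cases ht : 0 < t
    · rw [gPFn_of_pos p μ ht, indicator_of_mem (mem_Ioi.2 ht)]
    · rw [gPFn, if_neg ht, indicator_of_notMem (notMem_Ioi.2 (not_lt.1 ht))]
  rw [hind]
  exact ((hH.comp hlog).div hlog).indicator measurableSet_Ioi

lemma bddFun_gPFn (hμ : IsWeakLpBounded p K μ) (hp : 0 < p) : BddFun (gPFn p μ) := by
  refine ⟨(K ^ p).toNNReal, fun t => ?_⟩
  by_cases ht : 0 < t
  · have hlog : 0 < Real.log (1 + t) := Real.log_pos (by linarith)
    rw [gPFn_of_pos p μ ht, abs_div, div_le_iff₀ (abs_pos.2 hlog.ne')]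
    exact abs_le_mul_abs_of_lipschitzWith (hμ.lipschitzWith_logPrimitive hp)
      (logPrimitive_zero p μ) _
  · rw [gPFn, if_neg ht, abs_zero]
    exact NNReal.coe_nonneg _

lemma measurable_zetaPFn (hμ : IsWeakLpBounded p K μ) : Measurable (zetaPFn p μ) := by
  obtain ⟨ν, hν, hμν⟩ := hμ.aemeasurable
  have hint (t : ℝ) : ∫ s in Ioi 0, μ s ^ (p + 1 / Real.log t) =
      ∫ s in Ioi 0, ν s ^ (p + 1 / Real.log t) :=
    integral_congr_ae (hμν.mono fun s hs => by simp only [hs])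
  have hjoint : Measurable fun q : ℝ × ℝ => ν q.2 ^ (p + 1 / Real.log q.1) :=
    (hν.comp measurable_snd).pow (by fun_prop)
  have hnum : Measurable fun t => ∫ s in Ioi 0, μ s ^ (p + 1 / Real.log t) := by
    simp only [hint]
    exact hjoint.stronglyMeasurable.integral_prod_right'.measurable
  exact Measurable.ite measurableSet_Ioi (hnum.div Real.measurable_log) measurable_const

lemma integrableOn_rpow_add (hμ : IsWeakLpBounded p K μ) (hp : 0 < p) {e : ℝ} (he : 0 < e) :
    IntegrableOn (fun s => μ s ^ (p + e)) (Ioi 0) := by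
  have hdecay : -(1 / p) * (p + e) < -1 := by
    rw [neg_one_div_mul_add hp.ne']
    exact sub_lt_self _ (by positivity)
  refine ((integrableOn_one_add_rpow_Ioi hdecay).const_mul (K ^ (p + e))).mono'
    (hμ.aemeasurable.pow_const _).aestronglyMeasurable ?_
  filter_upwards [ae_restrict_mem measurableSet_Ioi] with s hs
  have hs : 0 < s := hs
  have hs' : 0 ≤ 1 + s := by linarith
  rw [Real.norm_of_nonneg (Real.rpow_nonneg (hμ.nonneg s hs) _), Real.rpow_mul hs',
    ← Real.mul_rpow hμ.constant_nonneg (by positivity)]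
  exact Real.rpow_le_rpow (hμ.nonneg s hs) (hμ.le s hs) (by positivity)

lemma integrableOn_rpow_mul_one_add_rpow (hμ : IsWeakLpBounded p K μ) (hp : 0 < p) {z : ℝ}
    (hz : 0 < z) : IntegrableOn (fun s => μ s ^ p * (1 + s) ^ (-z)) (Ioi 0) := by
  have hweight : Measurable fun s : ℝ => (1 + s) ^ (-z) := by fun_prop
  refine ((integrableOn_one_add_rpow_Ioi (a := -1 - z) (by linarith)).const_mul (K ^ p)).mono'
    ((hμ.aemeasurable.pow_const p).mul hweight.aemeasurable).aestronglyMeasurable ?_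
  filter_upwards [ae_restrict_mem measurableSet_Ioi] with s hs
  have hs : 0 < s := hs
  have hs' : 0 < 1 + s := by linarith
  have hμs := hμ.nonneg s hs
  rw [Real.norm_of_nonneg (by positivity), sub_eq_add_neg, Real.rpow_add hs', Real.rpow_neg_one,
    ← mul_assoc]
  gcongr
  exact hμ.rpow_le hp hs

lemma abs_integral_rpow_add_sub_le (hμ : IsWeakLpBounded p K μ) (hp : 0 < p) {e : ℝ} (he : 0 < e)
    (he1 : e ≤ 1) :
    |(∫ s in Ioi 0, μ s ^ (p + e)) - ∫ s in Ioi 0, μ s ^ p * (1 + s) ^ (-(e / p))| ≤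
      (1 / p + K ^ (p + 2)) * p := by
  set B := 1 / p + K ^ (p + 2)
  have hez : 0 < e / p := by positivity
  have hdecay : -1 - e / p < -1 := by linarith
  have hpointwise : ∀ s ∈ Ioi (0 : ℝ), ‖μ s ^ (p + e) - μ s ^ p * (1 + s) ^ (-(e / p))‖ ≤
      B * e * (1 + s) ^ (-1 - e / p) := by
    intro s (hs : 0 < s)
    have hs' : 0 < 1 + s := by linarith
    have h := abs_rpow_add_sub_rpow_mul_rpow_le hp he.le he1
      (Real.rpow_pos_of_pos hs' (-(1 / p))) (hμ.nonneg s hs) (hμ.le s hs)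
    have hexp : -(1 / p) * e = -(e / p) := by ring
    rwa [← Real.rpow_mul hs'.le, ← Real.rpow_mul hs'.le, hexp, neg_one_div_mul_add hp.ne'] at h
  rw [← integral_sub (hμ.integrableOn_rpow_add hp he)
    (hμ.integrableOn_rpow_mul_one_add_rpow hp hez)]
  calc |∫ s in Ioi 0, (μ s ^ (p + e) - μ s ^ p * (1 + s) ^ (-(e / p)))|
      ≤ ∫ s in Ioi 0, B * e * (1 + s) ^ (-1 - e / p) :=
        norm_integral_le_of_norm_le ((integrableOn_one_add_rpow_Ioi hdecay).const_mul _)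
          (ae_restrict_of_forall_mem measurableSet_Ioi hpointwise)
    _ = B * p := by
        have hden : -1 - e / p + 1 = -(e / p) := by ring
        rw [integral_const_mul, integral_one_add_rpow_Ioi hdecay, hden, neg_div_neg_eq]
        field_simp

/-- The bounded continuous function `t ↦ ∫₀^∞ (e^{-v / p} / p) H (v log t) / log t dv`, where `H`
is `logPrimitive p μ`. It mediates between `zetaPFn` and `gPFn`. -/
noncomputable def laplaceMean (hμ : IsWeakLpBounded p K μ) (hp : 0 < p) : ℝ →ᵇ ℝ :=
  ∫ v in Ioi 0, (Real.exp (-(v / p)) / p) •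
    logScaling (hμ.lipschitzWith_logPrimitive hp) (logPrimitive_zero p μ) v

lemma laplaceMean_apply (hμ : IsWeakLpBounded p K μ) (hp : 0 < p) {t : ℝ} (ht : Real.exp 1 ≤ t) :
    hμ.laplaceMean hp t =
      (∫ s in Ioi 0, μ s ^ p * (1 + s) ^ (-(1 / Real.log t / p))) / Real.log t := by
  have hr : 0 < Real.log t := truncLog_of_exp_one_le ht ▸ truncLog_pos t
  set r := Real.log t
  set z := 1 / r / p
  have hz : 0 < z := by positivity
  have hlaplace : ∫ s in Ioi 0, μ s ^ p * (1 + s) ^ (-z) =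
      z * ∫ x in Ioi 0, Real.exp (-(z * x)) * logPrimitive p μ x := by
    rw [integral_mul_one_add_rpow_neg hz (hμ.integrableOn_rpow_mul_one_add_rpow hp hz)]
    congr 1
    refine setIntegral_congr_fun measurableSet_Ioi fun x hx => ?_
    simp only [logPrimitive, abs_of_pos (mem_Ioi.1 hx)]
  have hscale := integral_comp_mul_left_Ioi
    (fun x => Real.exp (-(z * x)) * logPrimitive p μ x) 0 hr
  rw [mul_zero, smul_eq_mul] at hscale
  rw [laplaceMean, integral_smul_logScaling_apply _ _ (integrableOn_exp_neg_div_div_mul hp),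
    truncLog_of_exp_one_le ht]
  calc ∫ v in Ioi 0, Real.exp (-(v / p)) / p * (logPrimitive p μ (v * r) / r)
      = ∫ v in Ioi 0, z * (Real.exp (-(z * (r * v))) * logPrimitive p μ (r * v)) := by
        congr 1 with v
        have hzr : z * (r * v) = v / p := by simp only [z]; field_simp
        rw [hzr, mul_comm v r]
        simp only [z]
        field_simp
    _ = (∫ s in Ioi 0, μ s ^ p * (1 + s) ^ (-z)) / r := by
        rw [integral_const_mul, hscale, hlaplace]
        ring

lemma abs_zetaPFn_sub_laplaceMean_le (hμ : IsWeakLpBounded p K μ) (hp : 0 < p) {t : ℝ}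
    (ht : Real.exp 1 < t) :
    |zetaPFn p μ t - hμ.laplaceMean hp t| ≤ (1 / p + K ^ (p + 2)) * p / Real.log t := by
  have hr : 1 < Real.log t := (Real.lt_log_iff_exp_lt ((Real.exp_pos 1).trans ht)).2 ht
  have hr0 : 0 < Real.log t := one_pos.trans hr
  rw [zetaPFn, if_pos ht, hμ.laplaceMean_apply hp ht.le, ← sub_div, abs_div, abs_of_pos hr0]
  gcongr
  exact hμ.abs_integral_rpow_add_sub_le hp (by positivity) ((div_le_one hr0).2 hr.le)

lemma bddFun_zetaPFn (hμ : IsWeakLpBounded p K μ) (hp : 0 < p) : BddFun (zetaPFn p μ) := by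
  have hK := hμ.constant_nonneg
  refine ⟨(1 / p + K ^ (p + 2)) * p + ‖hμ.laplaceMean hp‖, fun t => ?_⟩
  by_cases ht : Real.exp 1 < t
  · have hr : 1 ≤ Real.log t := (Real.le_log_iff_exp_le ((Real.exp_pos 1).trans ht)).2 ht.le
    calc |zetaPFn p μ t|
        ≤ |zetaPFn p μ t - hμ.laplaceMean hp t| + |hμ.laplaceMean hp t| := by
          simpa only [sub_add_cancel] using
            abs_add_le (zetaPFn p μ t - hμ.laplaceMean hp t) (hμ.laplaceMean hp t)
      _ ≤ (1 / p + K ^ (p + 2)) * p + ‖hμ.laplaceMean hp‖ :=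
          add_le_add ((hμ.abs_zetaPFn_sub_laplaceMean_le hp ht).trans
            (div_le_self (by positivity) hr)) ((hμ.laplaceMean hp).norm_coe_le_norm t)
  · rw [zetaPFn, if_neg ht, abs_zero]
    positivity

lemma tendsto_zetaPFn_sub_laplaceMean (hμ : IsWeakLpBounded p K μ) (hp : 0 < p) :
    Tendsto (zetaPFn p μ - ⇑(hμ.laplaceMean hp)) atTop (𝓝 0) :=
  squeeze_zero_norm' ((eventually_gt_atTop (Real.exp 1)).mono fun _ ht =>
    hμ.abs_zetaPFn_sub_laplaceMean_le hp ht) (Real.tendsto_log_atTop.const_div_atTop _)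

lemma tendsto_logScaling_one_sub_gPFn (hμ : IsWeakLpBounded p K μ) (hp : 0 < p) :
    Tendsto (⇑(logScaling (hμ.lipschitzWith_logPrimitive hp) (logPrimitive_zero p μ) 1) -
      gPFn p μ) atTop (𝓝 0) := by
  have hlip := hμ.lipschitzWith_logPrimitive hp
  have hlog := ((Real.tendsto_log_comp_add_sub_log 1).abs.const_mul
    (2 * ((K ^ p).toNNReal : ℝ))).mul Real.tendsto_log_atTop.inv_tendsto_atTop
  simp only [abs_zero, mul_zero] at hlog
  refine squeeze_zero_norm' ?_ hlog
  filter_upwards [eventually_ge_atTop (Real.exp 1)] with t ht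
  have ht0 : 0 < t := (Real.exp_pos 1).trans_le ht
  have hr : 0 < Real.log t := truncLog_of_exp_one_le ht ▸ truncLog_pos t
  rw [Pi.sub_apply, logScaling_apply, truncLog_of_exp_one_le ht, one_mul, gPFn_of_pos p μ ht0,
    Pi.inv_apply, ← div_eq_mul_inv, abs_sub_comm, add_comm t]
  exact abs_div_sub_div_le_of_lipschitzWith hlip (logPrimitive_zero p μ) hr
    (Real.log_pos (by linarith))

end IsWeakLpBounded

end WeakLp

theorem zeta_residue_eq_p_mul_dixmier_trace_general {p K : ℝ} {μ : ℝ → ℝ}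
    {ω : (ℝ → ℝ) →ₗ[ℝ] ℝ} (hp : 0 < p) (hμ : IsWeakLpBounded p K μ) (hω : IsExtendedLimit ω)
    (hpow : IsPowerInvariant ω) :
    BddFun (zetaPFn p μ) ∧ BddFun (gPFn p μ) ∧ ω (zetaPFn p μ) = p * ω (gPFn p μ) := by
  have hZ := hμ.bddFun_zetaPFn hp
  have hg := hμ.bddFun_gPFn hp
  let W := logScaling (hμ.lipschitzWith_logPrimitive hp) (logPrimitive_zero p μ) 1
  refine ⟨hZ, hg, ?_⟩
  calc ω (zetaPFn p μ) = ω (hμ.laplaceMean hp) :=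
        hω.apply_congr hμ.measurable_zetaPFn hZ (hμ.laplaceMean hp).continuous.measurable
          (bddFun_coe _) (hμ.tendsto_zetaPFn_sub_laplaceMean hp)
    _ = p * ω W := by
        rw [IsWeakLpBounded.laplaceMean, hω.apply_integral_smul_logScaling _ _ hpow
          (integrableOn_exp_neg_div_div_mul hp), integral_exp_neg_div_div_mul hp]
    _ = p * ω (gPFn p μ) := by
        rw [hω.apply_congr W.continuous.measurable (bddFun_coe _) (hμ.measurable_gPFn hp) hg
          (hμ.tendsto_logScaling_one_sub_gPFn hp)]

/-- **Lemma 12.1.** Let `p > 1`, let `μ : [0,∞) → [0,1]` be nonincreasing with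
`μ(s) ≤ K(1+s)^{−1/p}` (the singular value function of a positive `T ∈ L^{(p,∞)}`),
and let `ω` be a positive linear functional on `L∞((0,∞))` lying between the essential
liminf and limsup at `+∞`, invariant under all dilations `D_c`, all power maps `P^a` and
the logarithmic Cesàro operator `M`.  Then `Z(t) = (1/log t)∫₀^∞ μ(s)^{p+1/log t} ds` and
`g_p(t) = (1/log(1+t))∫₀^t μ(s)^p ds` are bounded and `ω(Z) = p·ω(g_p)`. -/
theorem zeta_residue_eq_p_mul_dixmier_trace (p : ℝ) (hp : 1 < p) (K : ℝ) (hK : 0 < K)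
    (μ : ℝ → ℝ) (hμ0 : ∀ s : ℝ, 0 ≤ s → 0 ≤ μ s) (hμ1 : ∀ s : ℝ, 0 ≤ s → μ s ≤ 1)
    (hmono : AntitoneOn μ (Set.Ici 0))
    (hμbd : ∀ s : ℝ, 0 ≤ s → μ s ≤ K * (1 + s) ^ (-(1 / p)))
    (ω : (ℝ → ℝ) →ₗ[ℝ] ℝ)
    -- ω is positive
    (hpos : ∀ f : ℝ → ℝ, Measurable f → BddFun f →
      (∀ᵐ x ∂((volume : Measure ℝ).restrict (Set.Ioi 0)), 0 ≤ f x) → 0 ≤ ω f)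
    -- ω lies between the essential liminf and limsup at +∞
    (hsandwich : ∀ f : ℝ → ℝ, Measurable f → BddFun f →
      liminf f (atTop ⊓ ae ((volume : Measure ℝ).restrict (Set.Ioi 0))) ≤ ω f ∧
        ω f ≤ limsup f (atTop ⊓ ae ((volume : Measure ℝ).restrict (Set.Ioi 0))))
    -- ω is dilation invariant: ω ∘ D_c = ω for all c > 0
    (hdil : ∀ f : ℝ → ℝ, Measurable f → BddFun f →
      ∀ c : ℝ, 0 < c → ω (fun t => f (t / c)) = ω f)
    -- ω is power invariant: ω ∘ P^a = ω for all a > 0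
    (hpow : ∀ f : ℝ → ℝ, Measurable f → BddFun f →
      ∀ a : ℝ, 0 < a → ω (fun t => f (t ^ a)) = ω f)
    -- ω is M-invariant
    (hM : ∀ f : ℝ → ℝ, Measurable f → BddFun f → ω (Mop f) = ω f) :
    BddFun (zetaPFn p μ) ∧ BddFun (gPFn p μ) ∧
      ω (zetaPFn p μ) = p * ω (gPFn p μ) := by
  have hμ : IsWeakLpBounded p K μ :=
    ⟨aemeasurable_restrict_of_antitoneOn measurableSet_Ioi (hmono.mono Ioi_subset_Ici_self),
      fun s hs => hμ0 s hs.le, fun s hs => hμbd s hs.le⟩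
  exact zeta_residue_eq_p_mul_dixmier_trace_general (one_pos.trans hp) hμ hsandwich hpow
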